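/- arXiv:2109.13450 — 2 statements merged into one kernel-verified Lean document; each statement's English description precedes it below -/
import Mathlib

section
/- For every real constant c' with c' > 1, the ratio Γ(s, c'·s)/Γ(s) tends to 0 as s → +∞ (s ranging over the positive reals). -/
open Filter Topology

/-- The upper incomplete gamma function `Γ(s,x) = ∫ₓ^∞ t^(s-1) e^(-t) dt`. -/
noncomputable def upperGamma (s x : ℝ) : ℝ := ∫ t in Set.Ioi x, t ^ (s - 1) * Real.exp (-t)

/-! A Chernoff bound: for `0 < r ≤ 1` and `t > x ≥ 0`, `e^(-t) ≤ e^(-(1-r)x) e^(-rt)`, and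
integrating the right-hand side against `t^(s-1)` over all of `(0, ∞)` gives
`Γ(s,x) ≤ e^(-(1-r)x) r^(-s) Γ(s)`. At `x = c s` the optimal choice `r = 1/c` turns this into
`Γ(s, c s) / Γ(s) ≤ (c e^(1-c))^s`, whose base is less than `1` because `c < e^(c-1)` for
`c ≠ 1`. -/

open MeasureTheory Real Set

theorem upperGamma_nonneg (s : ℝ) {x : ℝ} (hx : 0 ≤ x) : 0 ≤ upperGamma s x :=
  setIntegral_nonneg measurableSet_Ioi fun t ht ↦
    have : 0 < t := hx.trans_lt ht
    by positivity

theorem integrableOn_rpow_mul_exp_neg_mul_Ioi {s r : ℝ} (hs : 0 < s) (hr : 0 < r) :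
    IntegrableOn (fun t ↦ t ^ (s - 1) * exp (-(r * t))) (Ioi 0) := by
  simpa only [rpow_one, neg_mul] using
    integrableOn_rpow_mul_exp_neg_mul_rpow (by linarith : -1 < s - 1) one_pos hr

theorem upperGamma_le_exp_mul_Gamma {s x r : ℝ} (hs : 0 < s) (hx : 0 ≤ x) (hr : 0 < r)
    (hr₁ : r ≤ 1) : upperGamma s x ≤ exp (-((1 - r) * x)) * ((1 / r) ^ s * Gamma s) := by
  have hsub : Ioi x ⊆ Ioi 0 := Ioi_subset_Ioi hx
  have hint_bound : IntegrableOn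
      (fun t ↦ exp (-((1 - r) * x)) * (t ^ (s - 1) * exp (-(r * t)))) (Ioi 0) :=
    (integrableOn_rpow_mul_exp_neg_mul_Ioi hs hr).const_mul _
  have hint : IntegrableOn (fun t ↦ t ^ (s - 1) * exp (-t)) (Ioi 0) := by
    simpa only [one_mul] using integrableOn_rpow_mul_exp_neg_mul_Ioi hs one_pos
  have hexp : ∀ t ∈ Ioi x, exp (-t) ≤ exp (-((1 - r) * x)) * exp (-(r * t)) := by
    intro t (ht : x < t)
    rw [← exp_add, exp_le_exp]
    linarith [mul_le_mul_of_nonneg_left ht.le (sub_nonneg.2 hr₁)]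
  calc upperGamma s x
    _ ≤ ∫ t in Ioi x, exp (-((1 - r) * x)) * (t ^ (s - 1) * exp (-(r * t))) := by
      refine setIntegral_mono_on (hint.mono_set hsub) (hint_bound.mono_set hsub)
        measurableSet_Ioi fun t ht ↦ ?_
      rw [mul_left_comm]
      exact mul_le_mul_of_nonneg_left (hexp t ht) (rpow_nonneg (hsub ht).le _)
    _ ≤ ∫ t in Ioi 0, exp (-((1 - r) * x)) * (t ^ (s - 1) * exp (-(r * t))) := by
      refine setIntegral_mono_set hint_bound ?_ hsub.eventuallyLE
      filter_upwards [ae_restrict_mem measurableSet_Ioi] with t (ht : 0 < t)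
      simp only [Pi.zero_apply]
      positivity
    _ = exp (-((1 - r) * x)) * ((1 / r) ^ s * Gamma s) := by
      rw [integral_const_mul, integral_rpow_mul_exp_neg_mul_Ioi hs hr]

theorem upperGamma_mul_self_div_Gamma_le {s c : ℝ} (hs : 0 < s) (hc : 1 ≤ c) :
    upperGamma s (c * s) / Gamma s ≤ (c * exp (1 - c)) ^ s := by
  have hc₀ : 0 < c := one_pos.trans_le hc
  rw [div_le_iff₀ (Gamma_pos_of_pos hs)]
  calc upperGamma s (c * s)
    _ ≤ exp (-((1 - c⁻¹) * (c * s))) * ((1 / c⁻¹) ^ s * Gamma s) :=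
      upperGamma_le_exp_mul_Gamma hs (by positivity) (inv_pos.2 hc₀) (inv_le_one_of_one_le₀ hc)
    _ = exp ((1 - c) * s) * (c ^ s * Gamma s) := by
      rw [one_div, inv_inv]
      congr 2
      field_simp
      ring
    _ = (c * exp (1 - c)) ^ s * Gamma s := by
      rw [mul_rpow hc₀.le (exp_pos _).le, ← exp_mul]
      ring

theorem mul_exp_one_sub_lt_one {c : ℝ} (hc : c ≠ 1) : c * exp (1 - c) < 1 := by
  calc c * exp (1 - c)
    _ < exp (c - 1) * exp (1 - c) := by
      gcongr
      simpa using add_one_lt_exp (sub_ne_zero.2 hc)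
    _ = 1 := by rw [← exp_add]; simp

/-- For every `c' > 1`, `Γ(s, c'·s)/Γ(s) → 0` as `s → +∞`. -/
theorem upperGamma_ratio_tendsto_zero (c' : ℝ) (hc' : 1 < c') :
    Tendsto (fun s : ℝ => upperGamma s (c' * s) / Real.Gamma s) atTop (𝓝 0) := by
  have hbase : 0 < c' * exp (1 - c') := by positivity
  have hlim : Tendsto (fun s : ℝ ↦ (c' * exp (1 - c')) ^ s) atTop (𝓝 0) :=
    tendsto_rpow_atTop_of_base_lt_one _ (by linarith) (mul_exp_one_sub_lt_one hc'.ne')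
  refine squeeze_zero' ?_ ?_ hlim
  · filter_upwards [eventually_gt_atTop 0] with s hs
    exact div_nonneg (upperGamma_nonneg s (by positivity)) (Gamma_pos_of_pos hs).le
  · filter_upwards [eventually_gt_atTop 0] with s hs
    exact upperGamma_mul_self_div_Gamma_le hs hc'.le
end

section
/- Fix an integer N ≥ 1, a real θ > 0 and ε ∈ (0,1), and let P(β) = ε·γ(N, N·(θ/β)·log(1 + β/θ))/Γ(N) + (1 − ε)·Γ(N, N·(1 + θ/β)·log(1 + β/θ))/Γ(N) for β > 0. Then P(β) → ε·γ(N,N)/Γ(N) + (1 − ε)·Γ(N,N)/Γ(N) =: L₀ as β → 0⁺, P(β) → 0 as β → ∞, and for every threshold P₀ ∈ (0, L₀) the equation P(β) = P₀ has a unique solution β > 0. -/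
open Filter Topology

/-- The lower incomplete gamma function `γ(s,x) = ∫₀ˣ t^(s-1) e^(-t) dt`. -/
noncomputable def lowerGamma (s x : ℝ) : ℝ := ∫ t in (0:ℝ)..x, t ^ (s - 1) * Real.exp (-t)

/-!
The argument `N (θ/β) log (1 + β/θ)` of `γ(N, ·)` decreases from `N` to `0` because it is `N` times
a secant slope of the strictly concave function `log` at `1`, and the argument
`N (1 + θ/β) log (1 + β/θ)` of `Γ(N, ·)` increases from `N` to `∞` because it is `N` times a secant
slope of the strictly convex function `x log x` at `1`. Since `γ(N, ·)` increases and `Γ(N, ·)`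
decreases, `P` is strictly decreasing; it is also continuous, so the intermediate value theorem
applies.
-/

open Set

lemma existsUnique_mem_eq_of_isPreconnected_of_injOn {X α : Type*} [TopologicalSpace X]
    [LinearOrder α] [TopologicalSpace α] [OrderClosedTopology α] {S : Set X} {l₁ l₂ : Filter X}
    [NeBot l₁] [NeBot l₂] {f : X → α} {v₁ v₂ y : α} (hS : IsPreconnected S) (hl₁ : l₁ ≤ 𝓟 S)
    (hl₂ : l₂ ≤ 𝓟 S) (hcont : ContinuousOn f S) (hinj : InjOn f S) (hf₁ : Tendsto f l₁ (𝓝 v₁))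
    (hf₂ : Tendsto f l₂ (𝓝 v₂)) (hy : y ∈ Ioo v₁ v₂) : ∃! x, x ∈ S ∧ f x = y := by
  obtain ⟨x, hx, hfx⟩ := hS.intermediate_value_Ioo hl₁ hl₂ hcont hf₁ hf₂ hy
  exact ⟨x, ⟨hx, hfx⟩, fun z ⟨hz, hfz⟩ => hinj hz hx (hfz.trans hfx.symm)⟩

section IncompleteGamma

variable {s : ℝ}

lemma intervalIntegrable_rpow_mul_exp_neg (hs : 0 < s) (a b : ℝ) :
    IntervalIntegrable (fun t : ℝ => t ^ (s - 1) * Real.exp (-t)) MeasureTheory.volume a b :=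
  (intervalIntegral.intervalIntegrable_rpow' (by linarith)).mul_continuousOn (by fun_prop)

lemma integrableOn_rpow_mul_exp_neg (hs : 0 < s) :
    MeasureTheory.IntegrableOn (fun t : ℝ => t ^ (s - 1) * Real.exp (-t)) (Ioi 0) := by
  simpa only [mul_comm] using Real.GammaIntegral_convergent hs

lemma upperGamma_zero (hs : 0 < s) : upperGamma s 0 = Real.Gamma s := by
  simp only [upperGamma, Real.Gamma_eq_integral hs, mul_comm]

lemma lowerGamma_zero (s : ℝ) : lowerGamma s 0 = 0 :=
  intervalIntegral.integral_same

lemma lowerGamma_add_upperGamma (hs : 0 < s) {x : ℝ} (hx : 0 ≤ x) :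
    lowerGamma s x + upperGamma s x = Real.Gamma s := by
  have hint := integrableOn_rpow_mul_exp_neg hs
  rw [← upperGamma_zero hs]
  exact intervalIntegral.integral_interval_add_Ioi hint (hint.mono_set (Ioi_subset_Ioi hx))

lemma upperGamma_eq_Gamma_sub_lowerGamma (hs : 0 < s) {x : ℝ} (hx : 0 ≤ x) :
    upperGamma s x = Real.Gamma s - lowerGamma s x :=
  eq_sub_of_add_eq' (lowerGamma_add_upperGamma hs hx)

lemma continuous_lowerGamma (hs : 0 < s) : Continuous (lowerGamma s) :=
  intervalIntegral.continuous_primitive (intervalIntegrable_rpow_mul_exp_neg hs) 0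

lemma strictMonoOn_lowerGamma (hs : 0 < s) : StrictMonoOn (lowerGamma s) (Ici 0) := by
  intro x hx y _ hxy
  have hint := intervalIntegrable_rpow_mul_exp_neg hs
  have hpos : 0 < ∫ t in x..y, t ^ (s - 1) * Real.exp (-t) := by
    refine intervalIntegral.intervalIntegral_pos_of_pos_on (hint x y) (fun t ht => ?_) hxy
    have : 0 < t := (mem_Ici.1 hx).trans_lt ht.1
    positivity
  rw [← sub_pos]
  exact hpos.trans_eq (intervalIntegral.integral_interval_sub_left (hint 0 y) (hint 0 x)).symm

lemma tendsto_lowerGamma_atTop (hs : 0 < s) :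
    Tendsto (lowerGamma s) atTop (𝓝 (Real.Gamma s)) := by
  rw [← upperGamma_zero hs]
  exact MeasureTheory.intervalIntegral_tendsto_integral_Ioi 0
    (integrableOn_rpow_mul_exp_neg hs) tendsto_id

lemma continuousOn_upperGamma (hs : 0 < s) : ContinuousOn (upperGamma s) (Ici 0) :=
  (continuous_const.sub (continuous_lowerGamma hs)).continuousOn.congr
    fun _ hx => upperGamma_eq_Gamma_sub_lowerGamma hs hx

lemma strictAntiOn_upperGamma (hs : 0 < s) : StrictAntiOn (upperGamma s) (Ici 0) := by
  intro x hx y hy hxy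
  linarith [strictMonoOn_lowerGamma hs hx hy hxy, lowerGamma_add_upperGamma hs hx,
    lowerGamma_add_upperGamma hs hy]

lemma tendsto_upperGamma_atTop (hs : 0 < s) : Tendsto (upperGamma s) atTop (𝓝 0) := by
  rw [← sub_self (Real.Gamma s)]
  refine ((tendsto_lowerGamma_atTop hs).const_sub (Real.Gamma s)).congr' ?_
  filter_upwards [eventually_ge_atTop 0] with x hx
  exact (upperGamma_eq_Gamma_sub_lowerGamma hs hx).symm

end IncompleteGamma

lemma continuousOn_log_one_add : ContinuousOn (fun u : ℝ => Real.log (1 + u)) (Ioi 0) :=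
  ContinuousOn.log (by fun_prop) fun _ hu => (add_pos one_pos hu).ne'

lemma continuousOn_inv_mul_log_one_add :
    ContinuousOn (fun u : ℝ => u⁻¹ * Real.log (1 + u)) (Ioi 0) :=
  (continuousOn_id.inv₀ fun _ hu => hu.ne').mul continuousOn_log_one_add

lemma continuousOn_one_add_inv_mul_log_one_add :
    ContinuousOn (fun u : ℝ => (1 + u⁻¹) * Real.log (1 + u)) (Ioi 0) :=
  (continuousOn_const.add (continuousOn_id.inv₀ fun _ hu => hu.ne')).mul continuousOn_log_one_add

lemma log_one_add_pos {u : ℝ} (hu : 0 < u) : 0 < Real.log (1 + u) :=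
  Real.log_pos (lt_add_of_pos_right 1 hu)

lemma strictAntiOn_inv_mul_log_one_add :
    StrictAntiOn (fun u : ℝ => u⁻¹ * Real.log (1 + u)) (Ioi 0) := by
  intro x (hx : 0 < x) y (hy : 0 < y) hxy
  have hslope := strictConcaveOn_log_Ioi.secant_strict_mono (a := 1) (x := 1 + x) (y := 1 + y)
    (mem_Ioi.2 one_pos) (add_pos one_pos hx) (add_pos one_pos hy) (by simpa using hx.ne')
    (by simpa using hy.ne') (by linarith)
  simpa [div_eq_inv_mul] using hslope

lemma strictMonoOn_one_add_inv_mul_log_one_add :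
    StrictMonoOn (fun u : ℝ => (1 + u⁻¹) * Real.log (1 + u)) (Ioi 0) := by
  intro x (hx : 0 < x) y (hy : 0 < y) hxy
  have hslope := Real.strictConvexOn_mul_log.secant_strict_mono
    (a := 1) (x := 1 + x) (y := 1 + y) (mem_Ici.2 zero_le_one) (add_pos one_pos hx).le
    (add_pos one_pos hy).le (by simpa using hx.ne') (by simpa using hy.ne') (by linarith)
  have hdiv {u : ℝ} (hu : 0 < u) :
      (1 + u) * Real.log (1 + u) / u = (1 + u⁻¹) * Real.log (1 + u) := by
    rw [mul_div_right_comm, add_div, div_self hu.ne', one_div, add_comm]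
  simpa [hdiv hx, hdiv hy] using hslope

lemma tendsto_inv_mul_log_one_add_nhdsGT_zero :
    Tendsto (fun u : ℝ => u⁻¹ * Real.log (1 + u)) (𝓝[>] 0) (𝓝 1) := by
  simpa [Function.comp_def] using
    (Real.tendsto_mul_log_one_add_div_atTop 1).comp tendsto_inv_nhdsGT_zero

lemma tendsto_one_add_inv_mul_log_one_add_nhdsGT_zero :
    Tendsto (fun u : ℝ => (1 + u⁻¹) * Real.log (1 + u)) (𝓝[>] 0) (𝓝 1) := by
  have hlog : Tendsto (fun u : ℝ => Real.log (1 + u)) (𝓝[>] 0) (𝓝 0) := by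
    have : ContinuousAt (fun u : ℝ => Real.log (1 + u)) 0 :=
      ContinuousAt.log (by fun_prop) (by simp)
    simpa using this.tendsto.mono_left nhdsWithin_le_nhds
  simpa [add_mul] using hlog.add tendsto_inv_mul_log_one_add_nhdsGT_zero

lemma tendsto_inv_mul_log_one_add_atTop :
    Tendsto (fun u : ℝ => u⁻¹ * Real.log (1 + u)) atTop (𝓝 0) := by
  simpa [Function.comp_def, div_eq_inv_mul] using
    (Real.tendsto_pow_log_div_mul_add_atTop 1 (-1) 1 one_ne_zero).comp
      (tendsto_atTop_add_const_left atTop (1 : ℝ) tendsto_id)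

lemma tendsto_one_add_inv_mul_log_one_add_atTop :
    Tendsto (fun u : ℝ => (1 + u⁻¹) * Real.log (1 + u)) atTop atTop := by
  have hinv : Tendsto (fun u : ℝ => 1 + u⁻¹) atTop (𝓝 1) := by
    simpa using tendsto_inv_atTop_zero.const_add (1 : ℝ)
  exact hinv.pos_mul_atTop one_pos
    (Real.tendsto_log_atTop.comp (tendsto_atTop_add_const_left atTop 1 tendsto_id))

lemma mapsTo_mul_inv_mul_log_one_add {s : ℝ} (hs : 0 ≤ s) :
    MapsTo (fun u : ℝ => s * u⁻¹ * Real.log (1 + u)) (Ioi 0) (Ici 0) := by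
  intro u (hu : 0 < u)
  have := log_one_add_pos hu
  exact mem_Ici.2 (by positivity)

lemma mapsTo_mul_one_add_inv_mul_log_one_add {s : ℝ} (hs : 0 ≤ s) :
    MapsTo (fun u : ℝ => s * (1 + u⁻¹) * Real.log (1 + u)) (Ioi 0) (Ici 0) := by
  intro u (hu : 0 < u)
  have := log_one_add_pos hu
  exact mem_Ici.2 (by positivity)

/-- The activity detection error probability as a function of the normalized variable `u = β / θ`,
so that `θ / β` becomes `u⁻¹`, and with the integer `N` replaced by a real parameter `s`. -/
noncomputable def detectionError (s ε u : ℝ) : ℝ :=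
  ε * lowerGamma s (s * u⁻¹ * Real.log (1 + u)) / Real.Gamma s
    + (1 - ε) * upperGamma s (s * (1 + u⁻¹) * Real.log (1 + u)) / Real.Gamma s

section DetectionError

variable {s : ℝ}

lemma tendsto_detectionError_nhdsGT_zero (hs : 0 < s) (ε : ℝ) :
    Tendsto (detectionError s ε) (𝓝[>] 0)
      (𝓝 (ε * lowerGamma s s / Real.Gamma s + (1 - ε) * upperGamma s s / Real.Gamma s)) := by
  have hlowerArg : Tendsto (fun u : ℝ => s * u⁻¹ * Real.log (1 + u)) (𝓝[>] 0) (𝓝 s) := by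
    simpa [mul_assoc] using tendsto_inv_mul_log_one_add_nhdsGT_zero.const_mul s
  have hupperArg : Tendsto (fun u : ℝ => s * (1 + u⁻¹) * Real.log (1 + u)) (𝓝[>] 0) (𝓝 s) := by
    simpa [mul_assoc] using tendsto_one_add_inv_mul_log_one_add_nhdsGT_zero.const_mul s
  have hlower := ((continuous_lowerGamma hs).tendsto s).comp hlowerArg
  have hupper :=
    ((continuousOn_upperGamma hs).continuousAt (Ici_mem_nhds hs)).tendsto.comp hupperArg
  exact ((hlower.const_mul ε).div_const _).add ((hupper.const_mul (1 - ε)).div_const _)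

lemma tendsto_detectionError_atTop (hs : 0 < s) (ε : ℝ) :
    Tendsto (detectionError s ε) atTop (𝓝 0) := by
  have hlowerArg : Tendsto (fun u : ℝ => s * u⁻¹ * Real.log (1 + u)) atTop (𝓝 0) := by
    simpa [mul_assoc] using tendsto_inv_mul_log_one_add_atTop.const_mul s
  have hupperArg : Tendsto (fun u : ℝ => s * (1 + u⁻¹) * Real.log (1 + u)) atTop atTop := by
    simpa only [mul_assoc] using tendsto_one_add_inv_mul_log_one_add_atTop.const_mul_atTop hs
  have hlower := ((continuous_lowerGamma hs).tendsto 0).comp hlowerArg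
  have hupper := (tendsto_upperGamma_atTop hs).comp hupperArg
  unfold detectionError
  simpa [lowerGamma_zero] using
    ((hlower.const_mul ε).div_const (Real.Gamma s)).add
      ((hupper.const_mul (1 - ε)).div_const (Real.Gamma s))

lemma continuousOn_detectionError (hs : 0 < s) (ε : ℝ) :
    ContinuousOn (detectionError s ε) (Ioi 0) := by
  have hlowerArg : ContinuousOn (fun u : ℝ => s * u⁻¹ * Real.log (1 + u)) (Ioi 0) := by
    simpa only [mul_assoc] using continuousOn_inv_mul_log_one_add.const_mul s
  have hupperArg : ContinuousOn (fun u : ℝ => s * (1 + u⁻¹) * Real.log (1 + u)) (Ioi 0) := by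
    simpa only [mul_assoc] using continuousOn_one_add_inv_mul_log_one_add.const_mul s
  have hlower := (continuous_lowerGamma hs).comp_continuousOn hlowerArg
  have hupper := (continuousOn_upperGamma hs).comp hupperArg
    (mapsTo_mul_one_add_inv_mul_log_one_add hs.le)
  exact ((hlower.const_mul ε).div_const _).add ((hupper.const_mul (1 - ε)).div_const _)

lemma strictAntiOn_detectionError {ε : ℝ} (hs : 0 < s) (hε0 : 0 ≤ ε) (hε1 : ε ≤ 1) :
    StrictAntiOn (detectionError s ε) (Ioi 0) := by
  have hlowerArg : StrictAntiOn (fun u : ℝ => s * u⁻¹ * Real.log (1 + u)) (Ioi 0) := by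
    simpa only [mul_assoc, Function.comp_def] using
      (strictMono_mul_left_of_pos hs).comp_strictAntiOn strictAntiOn_inv_mul_log_one_add
  have hupperArg : StrictMonoOn (fun u : ℝ => s * (1 + u⁻¹) * Real.log (1 + u)) (Ioi 0) := by
    simpa only [mul_assoc, Function.comp_def] using
      (strictMono_mul_left_of_pos hs).comp_strictMonoOn strictMonoOn_one_add_inv_mul_log_one_add
  have hlower := (strictMonoOn_lowerGamma hs).comp_strictAntiOn hlowerArg
    (mapsTo_mul_inv_mul_log_one_add hs.le)
  have hupper := (strictAntiOn_upperGamma hs).comp_strictMonoOn hupperArg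
    (mapsTo_mul_one_add_inv_mul_log_one_add hs.le)
  intro u hu v hv huv
  -- A convex combination of two positive decrements is positive, also for `ε = 0` and `ε = 1`.
  have hconvex := convex_Ioi (0 : ℝ) (sub_pos.2 (hlower hu hv huv)) (sub_pos.2 (hupper hu hv huv))
    hε0 (sub_nonneg.2 hε1) (add_sub_cancel ε 1)
  simp only [smul_eq_mul, mem_Ioi, Function.comp_apply] at hconvex
  simp only [detectionError, ← add_div]
  exact div_lt_div_of_pos_right (by linarith) (Real.Gamma_pos_of_pos hs)

end DetectionError

theorem detection_error_limits_and_unique_solution_general {s θ ε : ℝ}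
    (hs : 0 < s) (hθ : 0 < θ) (hε0 : 0 ≤ ε) (hε1 : ε ≤ 1) :
    Tendsto (fun β => detectionError s ε (β / θ)) (𝓝[>] 0)
      (𝓝 (ε * lowerGamma s s / Real.Gamma s + (1 - ε) * upperGamma s s / Real.Gamma s)) ∧
    Tendsto (fun β => detectionError s ε (β / θ)) atTop (𝓝 0) ∧
    ∀ P₀ : ℝ, 0 < P₀ →
      P₀ < ε * lowerGamma s s / Real.Gamma s + (1 - ε) * upperGamma s s / Real.Gamma s →
      ∃! β : ℝ, 0 < β ∧ detectionError s ε (β / θ) = P₀ := by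
  have hmaps : MapsTo (fun β : ℝ => β / θ) (Ioi 0) (Ioi 0) := fun _ hβ => div_pos hβ hθ
  have hscale : Tendsto (fun β : ℝ => β / θ) (𝓝[>] 0) (𝓝[>] 0) := by
    simpa using (continuous_id.div_const θ).continuousWithinAt.tendsto_nhdsWithin (x := 0) hmaps
  have hzero := (tendsto_detectionError_nhdsGT_zero hs ε).comp hscale
  have htop := (tendsto_detectionError_atTop hs ε).comp (tendsto_id.atTop_div_const hθ)
  have hcont := (continuousOn_detectionError hs ε).comp
    (continuous_id.div_const θ).continuousOn hmaps
  have hanti := (strictAntiOn_detectionError hs hε0 hε1).comp_strictMonoOn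
    (fun _ _ _ _ hlt => div_lt_div_of_pos_right hlt hθ) hmaps
  exact ⟨hzero, htop, fun P₀ hpos hlt =>
    existsUnique_mem_eq_of_isPreconnected_of_injOn (l₂ := 𝓝[>] 0) isPreconnected_Ioi
      (le_principal_iff.2 (Ioi_mem_atTop 0)) inf_le_right hcont hanti.injOn htop hzero
      ⟨hpos, hlt⟩⟩

/-- Limits of the activity detection error probability `P(β)` as `β → 0⁺` and `β → ∞`,
and existence and uniqueness of the solution of `P(β) = P₀` for thresholds
`P₀ ∈ (0, L₀)`, where `L₀ = ε·γ(N,N)/Γ(N) + (1-ε)·Γ(N,N)/Γ(N)`. -/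
theorem detection_error_limits_and_unique_solution (N : ℕ) (hN : 1 ≤ N) (θ ε : ℝ)
    (hθ : 0 < θ) (hε0 : 0 < ε) (hε1 : ε < 1) :
    Tendsto (fun β : ℝ =>
        ε * lowerGamma N (N * (θ / β) * Real.log (1 + β / θ)) / Real.Gamma N
        + (1 - ε) * upperGamma N (N * (1 + θ / β) * Real.log (1 + β / θ)) / Real.Gamma N)
      (𝓝[>] 0)
      (𝓝 (ε * lowerGamma N N / Real.Gamma N + (1 - ε) * upperGamma N N / Real.Gamma N)) ∧
    Tendsto (fun β : ℝ =>
        ε * lowerGamma N (N * (θ / β) * Real.log (1 + β / θ)) / Real.Gamma N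
        + (1 - ε) * upperGamma N (N * (1 + θ / β) * Real.log (1 + β / θ)) / Real.Gamma N)
      atTop (𝓝 0) ∧
    ∀ P₀ : ℝ, 0 < P₀ →
      P₀ < ε * lowerGamma N N / Real.Gamma N + (1 - ε) * upperGamma N N / Real.Gamma N →
      ∃! β : ℝ, 0 < β ∧
        ε * lowerGamma N (N * (θ / β) * Real.log (1 + β / θ)) / Real.Gamma N
        + (1 - ε) * upperGamma N (N * (1 + θ / β) * Real.log (1 + β / θ)) / Real.Gamma N
        = P₀ := by
  simpa only [detectionError, inv_div] using
    detection_error_limits_and_unique_solution_general (Nat.cast_pos.2 hN) hθ hε0.le hε1.le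
end
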